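/- Let n be a positive integer and let I ⊆ ℝ be a bounded open interval. Assume that f : I → ℂ is a continuous function such that f(t)^n = g(t) for all t ∈ I, where g ∈ C^{n-1,1}(Ī, ℂ). Then f is absolutely continuous on I, its almost-everywhere derivative f' belongs to the weak Lebesgue space L^{n'}_w(I) with n' = n/(n−1) (n' = ∞ excluded: for n = 1 the conclusion reads f' = g' ∈ L^∞), and for n ≥ 2 one has ‖f'‖_{n',w,I} ≤ C(n) · max{ (Lip_I(g^{(n-1)}))^{1/n} |I|^{1/n'}, ‖g'‖_{L^∞(I)}^{1/n} }, with a constant C(n) depending only on n. -/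

import Mathlib

open Set MeasureTheory Real

noncomputable section

/-- `f` is absolutely continuous on the set `S` : for every `ε > 0` there is `δ > 0` such
that for any finitely many non-overlapping intervals `[u i, v i] ⊆ S` of total length `< δ`
the sum `∑ ‖f (v i) - f (u i)‖` is `< ε`. -/
def AbsContOn {E : Type*} [NormedAddCommGroup E] (f : ℝ → E) (S : Set ℝ) : Prop :=
  ∀ ε : ℝ, 0 < ε → ∃ δ : ℝ, 0 < δ ∧
    ∀ (N : ℕ) (u v : Fin N → ℝ),
      (∀ i, u i ≤ v i ∧ Set.Icc (u i) (v i) ⊆ S) →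
      (∀ i j, i ≠ j → Disjoint (Set.Ioo (u i) (v i)) (Set.Ioo (u j) (v j))) →
      (∑ i, (v i - u i)) < δ →
      (∑ i, ‖f (v i) - f (u i)‖) < ε

/-- `d (i+1)` is the derivative of `d i` on `S` for all `i < k`; thus `d i` is the `i`-th
derivative of `d 0` on `S` for `i ≤ k`. -/
def DerivChain {E : Type*} [NormedAddCommGroup E] [NormedSpace ℝ E]
    (d : ℕ → ℝ → E) (k : ℕ) (S : Set ℝ) : Prop :=
  ∀ i < k, ∀ x ∈ S, HasDerivWithinAt (d i) (d (i + 1) x) S x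

/-- Hölder constant of exponent `a` of `g` on `S`. -/
def HolderConst {E : Type*} [NormedAddCommGroup E] (a : ℝ) (S : Set ℝ) (g : ℝ → E) : ℝ :=
  sSup {r : ℝ | ∃ x ∈ S, ∃ y ∈ S, x ≠ y ∧ r = ‖g x - g y‖ / |x - y| ^ a}

/-- Membership in `C^{k,1}(S)`, encoded via the chain of derivatives `d`:
`d 0` is `k` times differentiable with `i`-th derivative `d i`, and the top
derivative `d k` is Lipschitz. -/
def MemCk1 {E : Type*} [NormedAddCommGroup E] [NormedSpace ℝ E]
    (d : ℕ → ℝ → E) (k : ℕ) (S : Set ℝ) : Prop :=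
  DerivChain d k S ∧ ∃ L : ℝ, ∀ x ∈ S, ∀ y ∈ S, ‖d k x - d k y‖ ≤ L * |x - y|

/-- The `C^{k,1}`-norm: sup of all derivatives up to order `k` plus the Lipschitz
(Hölder-1) constant of the `k`-th derivative. -/
def CNorm {E : Type*} [NormedAddCommGroup E] (d : ℕ → ℝ → E) (k : ℕ) (S : Set ℝ) : ℝ :=
  sSup {r : ℝ | ∃ i ≤ k, ∃ x ∈ S, r = ‖d i x‖} + HolderConst 1 S (d k)
/-!
Put `m = n - 1` and `g = f ^ n`. Away from the zeros of `f` we have `n |f'| = |g'| / |g| ^ (m / n)`,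
and at a zero of `f` the derivative of `f` can be nonzero only if the zero is isolated. So, up to
a null set, `{|f'| > r}` is contained in a set on which `|g'| ^ n / |g| ^ m` is large, and replacing
`g` by its real or imaginary part one may estimate such sets for a real function `w` of class
`C ^ {m,1}`, with `L` the Lipschitz constant of its top derivative.

On an interval where `w` and `w'` do not vanish, `|w|` is monotone, so a Landau-type interpolation
inequality on the side where `|w|` decreases bounds `|w'|` at a point by the value of `|w|` there
and `L`. Hence, once `r ^ n` exceeds a multiple of `L`, a point where `|w'| ^ n > r ^ n |w| ^ m` is
close to a zero of `w w'`. If some derivative `w ^ (i)` with `1 ≤ i ≤ m` has no zero on the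
interval, Rolle's theorem bounds the number of zeros of `w w'`, and covering by small balls around
them gives the estimate. If instead every such derivative has a zero, then `|w'|` is at most
`(m + 1) L |I| ^ m`, and we bisect: each half is of the first kind, or again of the second kind with
a bound on `|w'|` smaller by the factor `2 ^ (-m)`. The estimates for the intervals of the first
kind are proportional to their lengths and add up to a bound independent of the number of
bisections, while points where `|w'| > η` are exhausted after finitely many of them.

Since `n' > 1`, the weak-type bound makes `f'` integrable on the bounded interval, and absolute
continuity follows from the fundamental theorem of calculus off the zeros of `f`.
-/

open scoped NNReal ENNReal Topology

/-! ### Chains of derivatives -/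

section DerivChain

variable {E F : Type*} [NormedAddCommGroup E] [NormedSpace ℝ E] [NormedAddCommGroup F]
  [NormedSpace ℝ F] {d : ℕ → ℝ → E} {w : ℕ → ℝ → ℝ} {i j k m : ℕ} {S T : Set ℝ} {L : ℝ≥0}
  {a b h x y M W : ℝ}

namespace DerivChain

theorem mono (hd : DerivChain d m S) (hTS : T ⊆ S) : DerivChain d m T :=
  fun i hi x hx => (hd i hi x (hTS hx)).mono hTS

theorem of_le (hd : DerivChain d m S) (hkm : k ≤ m) : DerivChain d k S :=
  fun i hi => hd i (hi.trans_le hkm)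

theorem tail (hd : DerivChain d (m + 1) S) : DerivChain (fun i => d (i + 1)) m S :=
  fun i hi => hd (i + 1) (Nat.succ_lt_succ hi)

theorem clm_comp (hd : DerivChain d m S) (A : E →L[ℝ] F) :
    DerivChain (fun i x => A (d i x)) m S :=
  fun i hi x hx => A.hasFDerivAt.comp_hasDerivWithinAt x (hd i hi x hx)

theorem forward_difference (hd : DerivChain d m (Icc a b)) (hh : 0 ≤ h) :
    DerivChain (fun i x => d i (x + h) - d i x) m (Icc a (b - h)) := by
  intro i hi x hx
  have hshift : MapsTo (· + h) (Icc a (b - h)) (Icc a b) :=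
    fun y hy => ⟨by linarith [hy.1], by linarith [hy.2]⟩
  have hsub : Icc a (b - h) ⊆ Icc a b := Icc_subset_Icc_right (by linarith)
  have hderiv := (hd i hi _ (hshift hx)).scomp x ((hasDerivWithinAt_id x _).add_const h) hshift
  rw [one_smul] at hderiv
  exact hderiv.sub ((hd i hi x (hsub hx)).mono hsub)

theorem continuousOn (hd : DerivChain d m S) (hi : i < m) : ContinuousOn (d i) S :=
  fun x hx => (hd i hi x hx).continuousWithinAt

theorem continuousOn_of_le (hd : DerivChain d m S) (hm : ContinuousOn (d m) S) (hi : i ≤ m) :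
    ContinuousOn (d i) S :=
  hi.eq_or_lt.elim (fun him => him ▸ hm) hd.continuousOn

theorem hasDerivAt (hd : DerivChain d m (Icc a b)) (hi : i < m) (hx : x ∈ Ioo a b) :
    HasDerivAt (d i) (d (i + 1) x) x :=
  (hd i hi x (Ioo_subset_Icc_self hx)).hasDerivAt (Icc_mem_nhds hx.1 hx.2)

theorem exists_mul_sub_eq_sub (hw : DerivChain w m (Icc a b)) (hi : i < m) (hx : x ∈ Icc a b)
    (hy : y ∈ Icc a b) (hxy : x < y) : ∃ c ∈ Ioo x y, w (i + 1) c * (y - x) = w i y - w i x := by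
  have hsub : Icc x y ⊆ Icc a b := Icc_subset_Icc hx.1 hy.2
  obtain ⟨c, hc, hslope⟩ := exists_hasDerivAt_eq_slope (w i) (w (i + 1)) hxy
    ((hw.continuousOn hi).mono hsub) fun z hz => (hw.mono hsub).hasDerivAt hi hz
  exact ⟨c, hc, by rw [hslope, div_mul_cancel₀ _ (sub_pos.2 hxy).ne']⟩

theorem exists_norm_mul_pow_le (hw : DerivChain w k (Icc a b)) (hh : 0 < h)
    (hkh : k * h ≤ b - a) (hM : ∀ x ∈ Icc a b, ‖w 0 x‖ ≤ M) :
    ∃ x ∈ Icc a b, ‖w k x‖ * h ^ k ≤ 2 ^ k * M := by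
  induction k generalizing w b M with
  | zero =>
    have ha : a ∈ Icc a b := left_mem_Icc.2 (by simpa using hkh)
    exact ⟨a, ha, by simpa using hM a ha⟩
  | succ k ih =>
    push_cast at hkh
    have hMdiff : ∀ x ∈ Icc a (b - h), ‖w 0 (x + h) - w 0 x‖ ≤ 2 * M := fun x hx =>
      calc ‖w 0 (x + h) - w 0 x‖ ≤ ‖w 0 (x + h)‖ + ‖w 0 x‖ := norm_sub_le _ _
        _ ≤ M + M := add_le_add (hM _ ⟨by linarith [hx.1], by linarith [hx.2]⟩)
          (hM _ ⟨hx.1, by linarith [hx.2]⟩)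
        _ = 2 * M := (two_mul M).symm
    obtain ⟨x, hx, hdiff⟩ :=
      ih ((hw.of_le k.le_succ).forward_difference hh.le) (by linarith) hMdiff
    obtain ⟨c, hc, hmean⟩ := hw.exists_mul_sub_eq_sub k.lt_succ_self
      (x := x) (y := x + h) ⟨hx.1, by linarith [hx.2]⟩ ⟨by linarith [hx.1], by linarith [hx.2]⟩
      (by linarith)
    refine ⟨c, ⟨hx.1.trans hc.1.le, by linarith [hc.2, hx.2]⟩, ?_⟩
    rw [add_sub_cancel_left] at hmean
    calc ‖w (k + 1) c‖ * h ^ (k + 1) = ‖w (k + 1) c * h‖ * h ^ k := by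
          rw [norm_mul, Real.norm_of_nonneg hh.le]; ring
      _ = ‖w k (x + h) - w k x‖ * h ^ k := by rw [hmean]
      _ ≤ 2 ^ k * (2 * M) := hdiff
      _ = 2 ^ (k + 1) * M := by ring

theorem norm_le_of_forall_exists_norm_mul_pow_le (hd : DerivChain d m (Icc a b))
    (hL : LipschitzOnWith L (d m) (Icc a b)) (hab : a < b) (hLW : L * (b - a) ^ (m + 1) ≤ W)
    (hW : ∀ i ≤ m, ∃ x ∈ Icc a b, ‖d i x‖ * (b - a) ^ i ≤ W) (hx : x ∈ Icc a b) :
    ‖d 0 x‖ ≤ (m + 2) * W := by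
  have hlen : 0 < b - a := sub_pos.2 hab
  have hW0 : 0 ≤ W := le_trans (by positivity) hLW
  induction m generalizing d W x with
  | zero =>
    obtain ⟨y, hy, hyW⟩ := hW 0 le_rfl
    rw [pow_zero, mul_one] at hyW
    rw [zero_add, pow_one] at hLW
    have hxy : ‖x - y‖ ≤ b - a := Real.dist_le_of_mem_Icc hx hy
    calc ‖d 0 x‖ ≤ ‖d 0 y‖ + ‖d 0 x - d 0 y‖ := norm_le_insert' _ _
      _ ≤ W + L * ‖x - y‖ := add_le_add hyW (hL.norm_sub_le hx hy)
      _ ≤ W + L * (b - a) := by gcongr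
      _ ≤ (↑(0 : ℕ) + 2) * W := by push_cast; linarith
  | succ m ih =>
    obtain ⟨y, hy, hyW⟩ := hW 0 (m + 1).zero_le
    rw [pow_zero, mul_one] at hyW
    have hxy : ‖x - y‖ ≤ b - a := Real.dist_le_of_mem_Icc hx hy
    have htail : ∀ z ∈ Icc a b, ‖d 1 z‖ ≤ (m + 2) * (W / (b - a)) := by
      refine fun z hz => ih hd.tail hL ?_ (fun i hi => ?_) hz (by positivity)
      · rwa [le_div_iff₀ hlen, mul_assoc, ← pow_succ]
      · obtain ⟨u, hu, huW⟩ := hW (i + 1) (Nat.succ_le_succ hi)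
        exact ⟨u, hu, by rwa [le_div_iff₀ hlen, mul_assoc, ← pow_succ]⟩
    have hosc : ‖d 0 x - d 0 y‖ ≤ (m + 2) * (W / (b - a)) * ‖x - y‖ :=
      (convex_Icc a b).norm_image_sub_le_of_norm_hasDerivWithin_le (hd 0 m.succ_pos) htail hy hx
    calc ‖d 0 x‖ ≤ ‖d 0 y‖ + ‖d 0 x - d 0 y‖ := norm_le_insert' _ _
      _ ≤ W + (m + 2) * (W / (b - a)) * (b - a) := by
        refine add_le_add hyW (hosc.trans ?_)
        gcongr
      _ = (↑(m + 1) + 2) * W := by push_cast; field_simp; ring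

theorem norm_one_mul_le (hw : DerivChain w m (Icc a b)) (hL : LipschitzOnWith L (w m) (Icc a b))
    (hm : m ≠ 0) (hab : a < b) (hM : ∀ y ∈ Icc a b, ‖w 0 y‖ ≤ M) (hx : x ∈ Icc a b) :
    ‖w 1 x‖ * (b - a) ≤ (m + 1) * (2 * m) ^ m * max M (L * (b - a) ^ (m + 1)) := by
  have hlen : 0 < b - a := sub_pos.2 hab
  have hmR : (1 : ℝ) ≤ m := by exact_mod_cast Nat.one_le_iff_ne_zero.2 hm
  set P := max M (L * (b - a) ^ (m + 1)) with hP
  have hP0 : 0 ≤ P := le_max_of_le_right (by positivity)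
  have hsmall : ∀ i ≤ m, ∃ y ∈ Icc a b, ‖w i y‖ * (b - a) ^ i ≤ (2 * m) ^ m * P := by
    intro i hi
    have him : i * ((b - a) / m) ≤ b - a := by
      rw [mul_div_left_comm]
      exact mul_le_of_le_one_right hlen.le
        (div_le_one_of_le₀ (by exact_mod_cast hi) (by positivity))
    obtain ⟨y, hy, hyM⟩ := (hw.of_le hi).exists_norm_mul_pow_le (by positivity) him hM
    refine ⟨y, hy, ?_⟩
    calc ‖w i y‖ * (b - a) ^ i = m ^ i * (‖w i y‖ * ((b - a) / m) ^ i) := by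
          rw [div_pow]; field_simp
      _ ≤ m ^ i * (2 ^ i * M) := mul_le_mul_of_nonneg_left hyM (by positivity)
      _ ≤ m ^ i * (2 ^ i * P) := by gcongr; exact le_max_left _ _
      _ = (2 * m) ^ i * P := by ring
      _ ≤ (2 * m) ^ m * P := by gcongr; linarith
  obtain ⟨k, rfl⟩ := Nat.exists_eq_succ_of_ne_zero hm
  have htail := hw.tail.norm_le_of_forall_exists_norm_mul_pow_le hL hab
    (W := (2 * ↑(k + 1)) ^ (k + 1) * P / (b - a)) ?_ (fun i hi => ?_) hx
  · calc ‖w 1 x‖ * (b - a) ≤ (k + 2) * ((2 * ↑(k + 1)) ^ (k + 1) * P / (b - a)) * (b - a) := by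
          gcongr
      _ = (↑(k + 1) + 1) * (2 * ↑(k + 1)) ^ (k + 1) * P := by push_cast; field_simp; ring
  · rw [le_div_iff₀ hlen, mul_assoc, ← pow_succ]
    exact (le_max_right _ _).trans (le_mul_of_one_le_left hP0 (one_le_pow₀ (by linarith)))
  · obtain ⟨y, hy, hyP⟩ := hsmall (i + 1) (Nat.succ_le_succ hi)
    exact ⟨y, hy, by rwa [le_div_iff₀ hlen, mul_assoc, ← pow_succ]⟩

theorem norm_one_le_of_forall_exists_eq_zero (hd : DerivChain d m (Icc a b))
    (hL : LipschitzOnWith L (d m) (Icc a b)) (hm : m ≠ 0) (hab : a < b)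
    (hz : ∀ i < m, ∃ y ∈ Icc a b, d (i + 1) y = 0) (hx : x ∈ Icc a b) :
    ‖d 1 x‖ ≤ (m + 1) * (L * (b - a) ^ m) := by
  have : 0 < b - a := sub_pos.2 hab
  obtain ⟨k, rfl⟩ := Nat.exists_eq_succ_of_ne_zero hm
  have htail := hd.tail.norm_le_of_forall_exists_norm_mul_pow_le hL hab le_rfl (fun i hi => ?_) hx
  · calc ‖d 1 x‖ ≤ (k + 2) * (L * (b - a) ^ (k + 1)) := htail
      _ = (↑(k + 1) + 1) * (L * (b - a) ^ (k + 1)) := by push_cast; ring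
  · obtain ⟨y, hy, hy0⟩ := hz i (Nat.lt_succ_of_le hi)
    exact ⟨y, hy, by rw [hy0, norm_zero, zero_mul]; positivity⟩

theorem monotoneOn_norm_or_antitoneOn_norm (hw : DerivChain w m S) (hm : m ≠ 0) (hS : Convex ℝ S)
    (h0 : ∀ y ∈ S, w 0 y ≠ 0) (h1 : ∀ y ∈ S, w 1 y ≠ 0) :
    MonotoneOn (fun y => ‖w 0 y‖) S ∨ AntitoneOn (fun y => ‖w 0 y‖) S := by
  have hderiv : ∀ y ∈ S, HasDerivWithinAt (fun z => w 0 z ^ 2) (2 * w 0 y * w 1 y) S y :=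
    fun y hy => by simpa using (hw 0 (Nat.pos_of_ne_zero hm) y hy).fun_pow 2
  have hcont : ContinuousOn (fun z => w 0 z ^ 2) S := fun y hy => (hderiv y hy).continuousWithinAt
  have hint : ∀ y ∈ interior S,
      HasDerivWithinAt (fun z => w 0 z ^ 2) (2 * w 0 y * w 1 y) (interior S) y :=
    fun y hy => (hderiv y (interior_subset hy)).mono interior_subset
  rcases hasDerivWithinAt_forall_lt_or_forall_gt_of_forall_ne hS hderiv (m := 0)
    (fun y hy => mul_ne_zero (mul_ne_zero two_ne_zero (h0 y hy)) (h1 y hy)) with hneg | hpos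
  · exact .inr fun y hy z hz hyz => sq_le_sq.1 <| antitoneOn_of_hasDerivWithinAt_nonpos hS hcont
      hint (fun v hv => (hneg v (interior_subset hv)).le) hy hz hyz
  · exact .inl fun y hy z hz hyz => sq_le_sq.1 <| monotoneOn_of_hasDerivWithinAt_nonneg hS hcont
      hint (fun v hv => (hpos v (interior_subset hv)).le) hy hz hyz

theorem norm_one_mul_le_of_ne_zero (hw : DerivChain w m (Icc (x - h) (x + h)))
    (hL : LipschitzOnWith L (w m) (Icc (x - h) (x + h))) (hm : m ≠ 0)
    (h0 : ∀ y ∈ Icc (x - h) (x + h), w 0 y ≠ 0) (h1 : ∀ y ∈ Icc (x - h) (x + h), w 1 y ≠ 0)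
    {t : ℝ} (ht : 0 < t) (hth : t ≤ h) :
    ‖w 1 x‖ * t ≤ (m + 1) * (2 * m) ^ m * max ‖w 0 x‖ (L * t ^ (m + 1)) := by
  have hleft : Icc (x - t) x ⊆ Icc (x - h) (x + h) := Icc_subset_Icc (by linarith) (by linarith)
  have hright : Icc x (x + t) ⊆ Icc (x - h) (x + h) := Icc_subset_Icc (by linarith) (by linarith)
  rcases hw.monotoneOn_norm_or_antitoneOn_norm hm (convex_Icc _ _) h0 h1 with hmono | hanti
  · have hx : x ∈ Icc (x - t) x := right_mem_Icc.2 (by linarith)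
    simpa using (hw.mono hleft).norm_one_mul_le (hL.mono hleft) hm (by linarith)
      (fun y hy => hmono (hleft hy) (hleft hx) hy.2) hx
  · have hx : x ∈ Icc x (x + t) := left_mem_Icc.2 (by linarith)
    simpa using (hw.mono hright).norm_one_mul_le (hL.mono hright) hm (by linarith)
      (fun y hy => hanti (hright hx) (hright hy) hy.1) hx

theorem encard_zeros_le (hw : DerivChain w m (Icc a b)) (hij : i + j ≤ m)
    (hne : ∀ x ∈ Icc a b, w (i + j) x ≠ 0) : {x ∈ Icc a b | w i x = 0}.encard ≤ j := by
  induction j generalizing i with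
  | zero => simpa [Set.encard_eq_zero, Set.eq_empty_iff_forall_notMem] using hne
  | succ j ih =>
    have hzeros : {x ∈ Icc a b | w (i + 1) x = 0}.encard ≤ j :=
      ih (by omega) (by rwa [add_assoc, add_comm 1 j])
    obtain ⟨T, hT⟩ := (Set.finite_of_encard_le_coe hzeros).exists_finset_coe
    rw [← hT, Set.encard_coe_eq_coe_finsetCard] at hzeros
    by_contra! hlarge
    obtain ⟨Z, hZsub, hZcard⟩ := Set.exists_subset_encard_eq (Order.add_one_le_of_lt hlarge)
    obtain ⟨Z, rfl⟩ := (Set.finite_of_encard_eq_coe (k := j + 2) hZcard).exists_finset_coe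
    have hrolle : Z.card ≤ T.card + 1 := by
      refine Finset.card_le_of_interleaved fun x hx y hy hxy _ => ?_
      obtain ⟨c, hc, hslope⟩ :=
        hw.exists_mul_sub_eq_sub (i := i) (by omega) (hZsub hx).1 (hZsub hy).1 hxy
      rw [(hZsub hx).2, (hZsub hy).2, sub_zero, mul_eq_zero] at hslope
      refine ⟨c, ?_, hc.1, hc.2⟩
      rw [← Finset.mem_coe, hT]
      exact ⟨⟨(hZsub hx).1.1.trans hc.1.le, hc.2.le.trans (hZsub hy).1.2⟩,
        hslope.resolve_right (sub_pos.2 hxy).ne'⟩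
    rw [Set.encard_coe_eq_coe_finsetCard] at hZcard
    norm_cast at hzeros hZcard
    omega

end DerivChain
end DerivChain

/-! ### The steep set of a real function -/

section SteepSet

variable {E : Type*} [NormedAddCommGroup E] {w : ℕ → ℝ → ℝ} {i k m : ℕ} {S T : Set ℝ} {L : ℝ≥0}
  {A a b h r x ρ σ η : ℝ}

/-- The set where `‖u'‖ ^ (m + 1) / ‖u‖ ^ m > r ^ (m + 1)`, cleared of denominators. If `u = f ^ n`
with `n = m + 1` and `u'` is the derivative of `u`, then away from the zeros of `f` it is the set
where `n * ‖f'‖ > r`. -/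
def steepSet (u u' : ℝ → E) (m : ℕ) (r : ℝ) : Set ℝ :=
  {x | r ^ (m + 1) * ‖u x‖ ^ m < ‖u' x‖ ^ (m + 1)}

/-- The constant `K` such that a point `x` of the steep set has a zero of `u * u'` within any
distance `h` for which `K ^ m * ‖u' x‖ ≤ r ^ (m + 1) * h ^ m`. It is twice the constant of the
interpolation inequality `DerivChain.norm_one_mul_le`. -/
def proximityConst (m : ℕ) : ℝ := 2 * ((m + 1) * (2 * m) ^ m)

theorem proximityConst_pos (m : ℕ) : 0 < proximityConst m := by
  unfold proximityConst
  rcases eq_or_ne m 0 with rfl | hm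
  · norm_num
  · positivity

theorem norm_pos_of_mem_steepSet {u u' : ℝ → E} (hr : 0 ≤ r) (hx : x ∈ steepSet u u' m r) :
    0 < ‖u' x‖ :=
  (norm_nonneg _).lt_of_ne' fun h0 => by
    have : r ^ (m + 1) * ‖u x‖ ^ m < 0 := by simpa [steepSet, h0] using hx
    exact this.not_ge (by positivity)

theorem volume_real_le_of_forall_exists_dist_le (hT : T.encard ≤ k) (hρ : 0 ≤ ρ)
    (hST : ∀ x ∈ S, ∃ z ∈ T, dist x z ≤ ρ) : volume.real S ≤ k * (2 * ρ) := by
  obtain ⟨T, rfl⟩ := (Set.finite_of_encard_le_coe hT).exists_finset_coe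
  rw [Set.encard_coe_eq_coe_finsetCard, Nat.cast_le] at hT
  have hcover : S ⊆ ⋃ z ∈ T, Metric.closedBall z ρ := fun x hx => by simpa using hST x hx
  calc volume.real S ≤ volume.real (⋃ z ∈ T, Metric.closedBall z ρ) :=
        measureReal_mono hcover (measure_biUnion_lt_top T.finite_toSet
          fun z _ => Metric.isBounded_closedBall.measure_lt_top).ne
    _ ≤ ∑ z ∈ T, volume.real (Metric.closedBall z ρ) := measureReal_biUnion_finset_le _ _
    _ = T.card * (2 * ρ) := by simp [Real.volume_real_closedBall hρ]
    _ ≤ k * (2 * ρ) := by gcongr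

theorem volume_real_le_of_forall_pos {φ : ℝ → ℝ} {B : ℝ} (hS : volume S ≠ ∞)
    (hφ : ∀ x ∈ S, 0 < φ x) (hB : ∀ η > 0, volume.real (S ∩ {x | η < φ x}) ≤ B) :
    volume.real S ≤ B := by
  have hmono : Monotone fun (j : ℕ) => S ∩ {x | 1 / ((j : ℝ) + 1) < φ x} := fun j l hjl x hx =>
    ⟨hx.1, lt_of_le_of_lt (b := 1 / ((j : ℝ) + 1)) (Nat.one_div_le_one_div hjl) hx.2⟩
  have hunion : ⋃ j : ℕ, S ∩ {x | 1 / ((j : ℝ) + 1) < φ x} = S := by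
    rw [← inter_iUnion, inter_eq_left]
    exact fun x hx => mem_iUnion.2 (exists_nat_one_div_lt (hφ x hx))
  have hlim := tendsto_measure_iUnion_atTop (μ := volume) hmono
  rw [hunion] at hlim
  exact le_of_tendsto' ((ENNReal.tendsto_toReal hS).comp hlim) fun j => hB _ (by positivity)

theorem volume_real_inter_Icc_le_add (S : Set ℝ) (a b c : ℝ) :
    volume.real (S ∩ Icc a b) ≤ volume.real (S ∩ Icc a c) + volume.real (S ∩ Icc c b) := by
  have hfin : ∀ p q, volume (S ∩ Icc p q) ≠ ∞ := fun p q =>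
    measure_ne_top_of_subset inter_subset_right measure_Icc_lt_top.ne
  refine (measureReal_mono ?_ (measure_union_ne_top (hfin _ _) (hfin _ _))).trans
    (measureReal_union_le _ _)
  rw [← inter_union_distrib_left]
  exact inter_subset_inter_right S Icc_subset_Icc_union_Icc

namespace DerivChain

theorem norm_one_mul_le_of_mem_steepSet (hw : DerivChain w m (Icc (x - h) (x + h)))
    (hL : LipschitzOnWith L (w m) (Icc (x - h) (x + h))) (hm : m ≠ 0) (hh : 0 ≤ h)
    (h0 : ∀ y ∈ Icc (x - h) (x + h), w 0 y ≠ 0) (h1 : ∀ y ∈ Icc (x - h) (x + h), w 1 y ≠ 0)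
    (hrL : proximityConst m ^ (m + 1) * L ≤ r ^ (m + 1)) (hx : x ∈ steepSet (w 0) (w 1) m r) :
    ‖w 1 x‖ * h ≤ proximityConst m * ‖w 0 x‖ := by
  have hK := proximityConst_pos m
  have hxI : x ∈ Icc (x - h) (x + h) := ⟨by linarith, by linarith⟩
  have hM : 0 < ‖w 0 x‖ := norm_pos_iff.2 (h0 x hxI)
  have hD : 0 < ‖w 1 x‖ := norm_pos_iff.2 (h1 x hxI)
  have hsteep : r ^ (m + 1) * ‖w 0 x‖ ^ m < ‖w 1 x‖ ^ (m + 1) := hx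
  set K := proximityConst m with hKdef
  set M := ‖w 0 x‖
  set D := ‖w 1 x‖
  by_contra! hlt
  -- At the scale `t = K * M / D < h` the interpolation inequality forces `2 * M ≤ L * t ^ (m + 1)`.
  set t := K * M / D with ht
  have hDt : D * t = K * M := by rw [ht]; field_simp
  have hinterp := hw.norm_one_mul_le_of_ne_zero hL hm h0 h1 (by positivity : 0 < t)
    ((div_le_iff₀ hD).2 (by linarith))
  have hmax : 2 * M ≤ max M (L * t ^ (m + 1)) := by
    refine le_of_mul_le_mul_left ?_ (half_pos hK)
    calc K / 2 * (2 * M) = D * t := by rw [hDt]; ring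
      _ ≤ K / 2 * max M (L * t ^ (m + 1)) := by
        rwa [hKdef, proximityConst, mul_div_cancel_left₀ _ two_ne_zero]
  have hLt : M ≤ L * t ^ (m + 1) := by
    rcases le_max_iff.1 hmax with hbad | hgood <;> linarith
  have hle : M * D ^ (m + 1) ≤ M * (r ^ (m + 1) * M ^ m) :=
    calc M * D ^ (m + 1) ≤ L * t ^ (m + 1) * D ^ (m + 1) := by gcongr
      _ = L * (D * t) ^ (m + 1) := by ring
      _ = K ^ (m + 1) * L * M ^ (m + 1) := by rw [hDt]; ring
      _ ≤ r ^ (m + 1) * M ^ (m + 1) := by gcongr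
      _ = M * (r ^ (m + 1) * M ^ m) := by ring
  exact hsteep.not_ge (le_of_mul_le_mul_left hle hM)

theorem pow_mul_pow_lt_of_mem_steepSet (hw : DerivChain w m (Icc (x - h) (x + h)))
    (hL : LipschitzOnWith L (w m) (Icc (x - h) (x + h))) (hm : m ≠ 0) (hh : 0 ≤ h)
    (h0 : ∀ y ∈ Icc (x - h) (x + h), w 0 y ≠ 0) (h1 : ∀ y ∈ Icc (x - h) (x + h), w 1 y ≠ 0)
    (hrL : proximityConst m ^ (m + 1) * L ≤ r ^ (m + 1)) (hx : x ∈ steepSet (w 0) (w 1) m r) :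
    r ^ (m + 1) * h ^ m < proximityConst m ^ m * ‖w 1 x‖ := by
  have hK := proximityConst_pos m
  have hD : 0 < ‖w 1 x‖ := norm_pos_iff.2 (h1 x ⟨by linarith, by linarith⟩)
  have hr : 0 ≤ r ^ (m + 1) := le_trans (by positivity) hrL
  have hsteep : r ^ (m + 1) * ‖w 0 x‖ ^ m < ‖w 1 x‖ ^ (m + 1) := hx
  have hDh := hw.norm_one_mul_le_of_mem_steepSet hL hm hh h0 h1 hrL hx
  refine lt_of_mul_lt_mul_right ?_ (pow_nonneg hD.le m)
  calc r ^ (m + 1) * h ^ m * ‖w 1 x‖ ^ m = r ^ (m + 1) * (‖w 1 x‖ * h) ^ m := by ring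
    _ ≤ r ^ (m + 1) * (proximityConst m * ‖w 0 x‖) ^ m := by gcongr
    _ = proximityConst m ^ m * (r ^ (m + 1) * ‖w 0 x‖ ^ m) := by ring
    _ < proximityConst m ^ m * ‖w 1 x‖ ^ (m + 1) := by gcongr
    _ = proximityConst m ^ m * ‖w 1 x‖ * ‖w 1 x‖ ^ m := by ring

theorem volume_real_steepSet_le_of_ne_zero (hw : DerivChain w m (Icc a b))
    (hL : LipschitzOnWith L (w m) (Icc a b)) (hi : i < m) (hne : ∀ x ∈ Icc a b, w (i + 1) x ≠ 0)
    (hrL : proximityConst m ^ (m + 1) * L ≤ r ^ (m + 1)) (hρ : 0 ≤ ρ)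
    (hsmall : ∀ x ∈ Icc a b, proximityConst m ^ m * ‖w 1 x‖ ≤ r ^ (m + 1) * ρ ^ m) :
    volume.real (steepSet (w 0) (w 1) m r ∩ Icc a b) ≤ 4 * (m + 1) * ρ := by
  set T : Set ℝ := {a, b} ∪ ({x ∈ Icc a b | w 0 x = 0} ∪ {x ∈ Icc a b | w 1 x = 0}) with hT
  have hTcard : T.encard ≤ (2 + (m + m) : ℕ) := by
    have hzeros0 := (hw.encard_zeros_le (i := 0) (j := i + 1) (by omega) (by simpa using hne)).trans
      (Nat.cast_le.2 hi)
    have hzeros1 := (hw.encard_zeros_le (i := 1) (j := i) (by omega)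
      (by simpa [add_comm] using hne)).trans (Nat.cast_le.2 hi.le)
    have hpair : ({a, b} : Set ℝ).encard ≤ 2 := (encard_insert_le {b} a).trans_eq
      (by rw [encard_singleton, one_add_one_eq_two])
    push_cast
    exact (encard_union_le _ _).trans (add_le_add hpair
      ((encard_union_le _ _).trans (add_le_add hzeros0 hzeros1)))
  refine (volume_real_le_of_forall_exists_dist_le hTcard hρ ?_).trans_eq (by push_cast; ring)
  rintro x ⟨hxsteep, hx⟩
  by_contra! hfar
  have hxa : ρ < x - a := by
    simpa [Real.dist_eq, abs_of_nonneg (sub_nonneg.2 hx.1)] using hfar a (by simp [hT])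
  have hbx : ρ < b - x := by
    simpa [Real.dist_eq, abs_sub_comm x b, abs_of_nonneg (sub_nonneg.2 hx.2)] using
      hfar b (by simp [hT])
  have hsub : Icc (x - ρ) (x + ρ) ⊆ Icc a b := Icc_subset_Icc (by linarith) (by linarith)
  have hnear : ∀ y ∈ Icc (x - ρ) (x + ρ), y ∉ T := fun y hy hyT =>
    (hfar y hyT).not_ge (by rw [dist_comm]; exact Metric.mem_closedBall.1 (by
      rwa [Real.closedBall_eq_Icc]))
  refine (hsmall x hx).not_gt ((hw.mono hsub).pow_mul_pow_lt_of_mem_steepSet (hL.mono hsub)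
    (Nat.ne_zero_of_lt hi) hρ (fun y hy h0 => hnear y hy ?_) (fun y hy h1 => hnear y hy ?_) hrL
    hxsteep)
  · exact .inr (.inl ⟨hsub hy, h0⟩)
  · exact .inr (.inr ⟨hsub hy, h1⟩)

theorem volume_real_steepSet_le_of_norm_one_le (hw : DerivChain w m (Icc a b))
    (hL : LipschitzOnWith L (w m) (Icc a b)) (hi : i < m) (hne : ∀ x ∈ Icc a b, w (i + 1) x ≠ 0)
    (hrL : proximityConst m ^ (m + 1) * L ≤ r ^ (m + 1)) (hσ : 0 ≤ σ)
    (hσL : proximityConst m ^ m * ((m + 1) * L) ≤ r ^ (m + 1) * σ ^ m) (hh : 0 ≤ h)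
    (hbound : ∀ x ∈ Icc a b, ‖w 1 x‖ ≤ (m + 1) * (L * h ^ m)) :
    volume.real (steepSet (w 0) (w 1) m r ∩ Icc a b) ≤ 4 * (m + 1) * (σ * h) := by
  have hK := proximityConst_pos m
  refine hw.volume_real_steepSet_le_of_ne_zero hL hi hne hrL (by positivity) fun x hx => ?_
  calc proximityConst m ^ m * ‖w 1 x‖ ≤ proximityConst m ^ m * ((m + 1) * (L * h ^ m)) := by
        gcongr
        exact hbound x hx
    _ = proximityConst m ^ m * ((m + 1) * L) * h ^ m := by ring
    _ ≤ r ^ (m + 1) * σ ^ m * h ^ m := by gcongr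
    _ = r ^ (m + 1) * (σ * h) ^ m := by rw [mul_pow, mul_assoc]

theorem volume_real_steepSet_inter_lt_le (hw : DerivChain w m (Icc a b))
    (hL : LipschitzOnWith L (w m) (Icc a b)) (hm : m ≠ 0) (hab : a < b)
    (hz : ∀ i < m, ∃ y ∈ Icc a b, w (i + 1) y = 0)
    (hrL : proximityConst m ^ (m + 1) * L ≤ r ^ (m + 1)) (hσ : 0 ≤ σ)
    (hσL : proximityConst m ^ m * ((m + 1) * L) ≤ r ^ (m + 1) * σ ^ m)
    (hk : (m + 1) * (L * (b - a) ^ m) ≤ 2 ^ k * η) :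
    volume.real ((steepSet (w 0) (w 1) m r ∩ {x | η < ‖w 1 x‖}) ∩ Icc a b) ≤
      8 * (m + 1) * (σ * (b - a)) := by
  have hlen : 0 < b - a := sub_pos.2 hab
  have hbound : ∀ x ∈ Icc a b, ‖w 1 x‖ ≤ (m + 1) * (L * (b - a) ^ m) :=
    fun x => hw.norm_one_le_of_forall_exists_eq_zero hL hm hab hz
  induction k generalizing a b with
  | zero =>
    have hempty : (steepSet (w 0) (w 1) m r ∩ {x | η < ‖w 1 x‖}) ∩ Icc a b = ∅ :=
      eq_empty_of_forall_notMem fun x hx =>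
        hx.1.2.not_ge ((hbound x hx.2).trans (by simpa using hk))
    rw [hempty, measureReal_empty]
    positivity
  | succ k ih =>
    have hhalf : ∀ p q, a ≤ p → q ≤ b → q - p = (b - a) / 2 →
        volume.real ((steepSet (w 0) (w 1) m r ∩ {x | η < ‖w 1 x‖}) ∩ Icc p q) ≤
          4 * (m + 1) * (σ * (b - a)) := by
      intro p q hp hq hpq
      have hsub : Icc p q ⊆ Icc a b := Icc_subset_Icc hp hq
      have hlt : p < q := by linarith
      by_cases hz' : ∀ i < m, ∃ y ∈ Icc p q, w (i + 1) y = 0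
      · refine (ih (hw.mono hsub) (hL.mono hsub) hlt hz' ?_ (by linarith) fun x =>
          (hw.mono hsub).norm_one_le_of_forall_exists_eq_zero (hL.mono hsub) hm hlt hz').trans_eq
          (by rw [hpq]; ring)
        have h2m : (2 : ℝ) ≤ 2 ^ m := le_self_pow₀ one_le_two hm
        calc (m + 1) * (L * (q - p) ^ m) = (m + 1) * (L * (b - a) ^ m) / 2 ^ m := by
              rw [hpq, div_pow]; ring
          _ ≤ (m + 1) * (L * (b - a) ^ m) / 2 := by gcongr
          _ ≤ 2 ^ k * η := by rw [pow_succ] at hk; linarith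
      · push Not at hz'
        obtain ⟨i, hi, hne⟩ := hz'
        exact (measureReal_mono (inter_subset_inter_left _ inter_subset_left)
          (measure_ne_top_of_subset inter_subset_right measure_Icc_lt_top.ne)).trans <|
          (hw.mono hsub).volume_real_steepSet_le_of_norm_one_le (hL.mono hsub) hi hne hrL hσ hσL
            hlen.le fun x hx => hbound x (hsub hx)
    refine (volume_real_inter_Icc_le_add _ a b ((a + b) / 2)).trans ?_
    linarith [hhalf a ((a + b) / 2) le_rfl (by linarith) (by ring),
      hhalf ((a + b) / 2) b (by linarith) le_rfl (by ring)]

theorem volume_real_steepSet_le (hw : DerivChain w m (Icc a b))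
    (hL : LipschitzOnWith L (w m) (Icc a b)) (hm : m ≠ 0) (hab : a < b)
    (hrL : proximityConst m ^ (m + 1) * L ≤ r ^ (m + 1)) (hr : 0 ≤ r) (hρ : 0 ≤ ρ)
    (hρw : ∀ x ∈ Icc a b, proximityConst m ^ m * ‖w 1 x‖ ≤ r ^ (m + 1) * ρ ^ m)
    (hρL : proximityConst m ^ m * ((m + 1) * (L * (b - a) ^ m)) ≤ r ^ (m + 1) * ρ ^ m) :
    volume.real (steepSet (w 0) (w 1) m r ∩ Icc a b) ≤ 8 * (m + 1) * ρ := by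
  have hlen : 0 < b - a := sub_pos.2 hab
  by_cases hz : ∀ i < m, ∃ y ∈ Icc a b, w (i + 1) y = 0
  · refine volume_real_le_of_forall_pos (measure_ne_top_of_subset inter_subset_right
      measure_Icc_lt_top.ne) (fun x hx => norm_pos_of_mem_steepSet hr hx.1) fun η hη => ?_
    obtain ⟨k, hk⟩ := pow_unbounded_of_one_lt ((m + 1) * (L * (b - a) ^ m) / η) one_lt_two
    have hσL : proximityConst m ^ m * ((m + 1) * L) ≤ r ^ (m + 1) * (ρ / (b - a)) ^ m := by
      rw [div_pow, ← mul_div_assoc, le_div_iff₀ (by positivity)]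
      exact le_of_eq_of_le (by ring) hρL
    have hheavy := hw.volume_real_steepSet_inter_lt_le hL hm hab hz hrL (by positivity) hσL
      ((div_lt_iff₀ hη).1 hk).le
    rwa [inter_right_comm, div_mul_cancel₀ _ hlen.ne'] at hheavy
  · push Not at hz
    obtain ⟨i, hi, hne⟩ := hz
    refine (hw.volume_real_steepSet_le_of_ne_zero hL hi hne hrL hρ hρw).trans ?_
    gcongr
    norm_num

end DerivChain

/-- The constant of the weak-type inequality `DerivChain.pow_mul_volume_real_steepSet_pow_le`. -/
def weakTypeConst (m : ℕ) : ℝ :=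
  proximityConst m ^ (m + 1) + (8 * (m + 1)) ^ m * (proximityConst m ^ m * (m + 1))

theorem weakTypeConst_pos (m : ℕ) : 0 < weakTypeConst m := by
  have := proximityConst_pos m
  unfold weakTypeConst
  positivity

theorem DerivChain.pow_mul_volume_real_steepSet_pow_le (hw : DerivChain w m (Icc a b))
    (hL : LipschitzOnWith L (w m) (Icc a b)) (hm : m ≠ 0) (hab : a < b)
    (hA : ∀ x ∈ Icc a b, ‖w 1 x‖ ≤ A) (hr : 0 ≤ r) :
    r ^ (m + 1) * volume.real (steepSet (w 0) (w 1) m r ∩ Icc a b) ^ m ≤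
      weakTypeConst m * max (L * (b - a) ^ m) A := by
  have : 0 < b - a := sub_pos.2 hab
  have hK := proximityConst_pos m
  set V := volume.real (steepSet (w 0) (w 1) m r ∩ Icc a b)
  set P := max (L * (b - a) ^ m) A
  have hP0 : 0 ≤ P := le_max_of_le_left (by positivity)
  rcases hr.eq_or_lt with rfl | hr
  · simpa using mul_nonneg (weakTypeConst_pos m).le hP0
  rw [weakTypeConst, add_mul]
  rcases le_or_gt (proximityConst m ^ (m + 1) * L) (r ^ (m + 1)) with hrL | hrL
  · set Q := proximityConst m ^ m * (m + 1) * P with hQ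
    obtain ⟨ρ, hρ, hρQ⟩ : ∃ ρ : ℝ, 0 ≤ ρ ∧ r ^ (m + 1) * ρ ^ m = Q := by
      refine ⟨(Q / r ^ (m + 1)) ^ (m⁻¹ : ℝ), by positivity, ?_⟩
      rw [Real.rpow_inv_natCast_pow (by positivity) hm]
      field_simp
    have hV : V ≤ 8 * (m + 1) * ρ := by
      refine hw.volume_real_steepSet_le hL hm hab hrL hr.le hρ (fun x hx => ?_) ?_ <;>
        rw [hρQ, hQ, mul_assoc]
      · gcongr
        calc ‖w 1 x‖ ≤ P := (hA x hx).trans (le_max_right _ _)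
          _ ≤ (m + 1) * P := le_mul_of_one_le_left hP0 (by simp)
      · gcongr
        exact le_max_left _ _
    calc r ^ (m + 1) * V ^ m ≤ r ^ (m + 1) * (8 * (m + 1) * ρ) ^ m := by gcongr
      _ = (8 * (m + 1)) ^ m * (proximityConst m ^ m * (m + 1)) * P := by
        rw [mul_pow, mul_left_comm, hρQ, hQ]; ring
      _ ≤ _ := le_add_of_nonneg_left (by positivity)
  · have hV : V ≤ b - a := by
      rw [← Real.volume_real_Icc_of_le hab.le]
      exact measureReal_mono inter_subset_right measure_Icc_lt_top.ne
    calc r ^ (m + 1) * V ^ m ≤ proximityConst m ^ (m + 1) * L * (b - a) ^ m := by gcongr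
      _ ≤ proximityConst m ^ (m + 1) * P := by
        rw [mul_assoc]; gcongr; exact le_max_left _ _
      _ ≤ _ := le_add_of_nonneg_right (by positivity)

theorem steepSet_subset_re_union_im {u u' : ℝ → ℂ} (hr : 0 ≤ r) :
    steepSet u u' m (2 * r) ⊆
      steepSet (fun x => (u x).re) (fun x => (u' x).re) m r ∪
        steepSet (fun x => (u x).im) (fun x => (u' x).im) m r := by
  intro x hx
  have key : ∀ p p' : ℝ, ‖p‖ ≤ ‖u x‖ → ‖u' x‖ ≤ 2 * ‖p'‖ →
      r ^ (m + 1) * ‖p‖ ^ m < ‖p'‖ ^ (m + 1) := by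
    intro p p' hp hp'
    refine lt_of_mul_lt_mul_left ?_ (by positivity : (0 : ℝ) ≤ 2 ^ (m + 1))
    calc 2 ^ (m + 1) * (r ^ (m + 1) * ‖p‖ ^ m) = (2 * r) ^ (m + 1) * ‖p‖ ^ m := by ring
      _ ≤ (2 * r) ^ (m + 1) * ‖u x‖ ^ m := by gcongr
      _ < ‖u' x‖ ^ (m + 1) := hx
      _ ≤ (2 * ‖p'‖) ^ (m + 1) := by gcongr
      _ = 2 ^ (m + 1) * ‖p'‖ ^ (m + 1) := by ring
  have hsplit : ‖u' x‖ ≤ ‖(u' x).re‖ + ‖(u' x).im‖ := Complex.norm_le_abs_re_add_abs_im _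
  rcases le_total ‖(u' x).im‖ ‖(u' x).re‖ with hle | hle
  · exact .inl (key _ _ (Complex.abs_re_le_norm _) (by linarith))
  · exact .inr (key _ _ (Complex.abs_im_le_norm _) (by linarith))

theorem DerivChain.pow_mul_volume_real_steepSet_complex_pow_le {d : ℕ → ℝ → ℂ}
    (hd : DerivChain d m (Icc a b)) (hL : LipschitzOnWith L (d m) (Icc a b)) (hm : m ≠ 0)
    (hab : a < b) (hA : ∀ x ∈ Icc a b, ‖d 1 x‖ ≤ A) (hr : 0 ≤ r) :
    r ^ (m + 1) * volume.real (steepSet (d 0) (d 1) m (2 * r) ∩ Icc a b) ^ m ≤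
      2 ^ m * weakTypeConst m * max (L * (b - a) ^ m) A := by
  obtain ⟨φ, hφ, hV⟩ : ∃ φ : ℂ →L[ℝ] ℝ, ‖φ‖ ≤ 1 ∧
      volume.real (steepSet (d 0) (d 1) m (2 * r) ∩ Icc a b) ≤
        2 * volume.real (steepSet (fun x => φ (d 0 x)) (fun x => φ (d 1 x)) m r ∩ Icc a b) := by
    have hsub := inter_subset_inter_left (Icc a b)
      (steepSet_subset_re_union_im (m := m) (u := d 0) (u' := d 1) hr)
    rw [union_inter_distrib_right] at hsub
    have hsum := (measureReal_mono hsub <| measure_union_ne_top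
      (measure_ne_top_of_subset inter_subset_right measure_Icc_lt_top.ne)
      (measure_ne_top_of_subset inter_subset_right measure_Icc_lt_top.ne)).trans
      (measureReal_union_le (μ := volume) _ _)
    rcases le_total
      (volume.real (steepSet (fun x => (d 0 x).re) (fun x => (d 1 x).re) m r ∩ Icc a b))
      (volume.real (steepSet (fun x => (d 0 x).im) (fun x => (d 1 x).im) m r ∩ Icc a b))
      with hle | hle
    · exact ⟨Complex.imCLM, Complex.imCLM_norm.le, by simp only [Complex.imCLM_apply]; linarith⟩
    · exact ⟨Complex.reCLM, Complex.reCLM_norm.le, by simp only [Complex.reCLM_apply]; linarith⟩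
  have hφL : LipschitzOnWith L (fun x => φ (d m x)) (Icc a b) := by
    rw [← one_mul L]
    exact (φ.lipschitz.weaken hφ).comp_lipschitzOnWith hL
  have hφw := (hd.clm_comp φ).pow_mul_volume_real_steepSet_pow_le hφL hm hab
    (fun x hx => (φ.le_of_opNorm_le hφ _).trans (by simpa using hA x hx)) hr
  calc _ ≤ r ^ (m + 1) *
        (2 * volume.real (steepSet (fun x => φ (d 0 x)) (fun x => φ (d 1 x)) m r ∩ Icc a b)) ^ m :=
        by gcongr
    _ = 2 ^ m * (r ^ (m + 1) *
        volume.real (steepSet (fun x => φ (d 0 x)) (fun x => φ (d 1 x)) m r ∩ Icc a b) ^ m) := by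
        ring
    _ ≤ 2 ^ m * (weakTypeConst m * max (L * (b - a) ^ m) A) := by gcongr
    _ = _ := (mul_assoc _ _ _).symm

end SteepSet

/-! ### Hölder constants and suprema over open intervals -/

section HolderConst

variable {E : Type*} [NormedAddCommGroup E] {g : ℝ → E} {S : Set ℝ} {a b x L : ℝ}

theorem lipschitzOnWith_toNNReal_of_norm_sub_le
    (hL : ∀ x ∈ S, ∀ y ∈ S, ‖g x - g y‖ ≤ L * |x - y|) : LipschitzOnWith L.toNNReal g S :=
  LipschitzOnWith.of_dist_le_mul fun x hx y hy => by
    rw [dist_eq_norm, Real.dist_eq]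
    exact (hL x hx y hy).trans (by gcongr; exact Real.le_coe_toNNReal L)

theorem holderConst_nonneg (α : ℝ) (S : Set ℝ) (g : ℝ → E) : 0 ≤ HolderConst α S g :=
  Real.sSup_nonneg (by rintro _ ⟨x, -, y, -, -, rfl⟩; positivity)

theorem norm_sub_le_holderConst_mul {K : ℝ≥0} (hg : LipschitzOnWith K g S) :
    ∀ x ∈ S, ∀ y ∈ S, ‖g x - g y‖ ≤ HolderConst 1 S g * |x - y| := by
  intro x hx y hy
  rcases eq_or_ne x y with rfl | hxy
  · simp
  have hpos : ∀ {x y : ℝ}, x ≠ y → 0 < |x - y| := fun h => abs_pos.2 (sub_ne_zero.2 h)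
  rw [← div_le_iff₀ (hpos hxy), ← Real.rpow_one |x - y|]
  refine le_csSup ⟨K, ?_⟩ ⟨x, hx, y, hy, hxy, rfl⟩
  rintro _ ⟨x, hx, y, hy, hxy, rfl⟩
  rw [Real.rpow_one, div_le_iff₀ (hpos hxy)]
  exact hg.norm_sub_le hx hy

theorem lipschitzOnWith_holderConst_Ioo {K : ℝ≥0} (hab : a < b)
    (hg : LipschitzOnWith K g (Icc a b)) :
    LipschitzOnWith (HolderConst 1 (Ioo a b) g).toNNReal g (Icc a b) := by
  have hopen := lipschitzOnWith_toNNReal_of_norm_sub_le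
    (norm_sub_le_holderConst_mul (hg.mono Ioo_subset_Icc_self))
  rw [← closure_Ioo hab.ne] at hg ⊢
  exact hopen.closure hg.continuousOn

theorem norm_le_sSup_image_Ioo (hab : a < b) (hg : ContinuousOn g (Icc a b)) (hx : x ∈ Icc a b) :
    ‖g x‖ ≤ sSup ((fun x => ‖g x‖) '' Ioo a b) := by
  have hbdd : BddAbove ((fun x => ‖g x‖) '' Ioo a b) :=
    (isCompact_Icc.bddAbove_image hg.norm).mono (image_mono Ioo_subset_Icc_self)
  rw [← closure_Ioo hab.ne] at hx hg
  exact le_on_closure (fun y hy => le_csSup hbdd ⟨y, hy, rfl⟩) hg.norm continuousOn_const hx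

end HolderConst

/-! ### Derivatives of continuous roots -/

section Root

theorem hasDerivAt_of_pow_eventuallyEq {𝕜 F : Type*} [NontriviallyNormedField 𝕜] [NormedField F]
    [NormedAlgebra 𝕜 F] {f g : 𝕜 → F} {g' : F} {t : 𝕜} {n : ℕ} (hf : ContinuousAt f t)
    (hfg : ∀ᶠ s in 𝓝 t, f s ^ n = g s) (hg : HasDerivAt g g' t)
    (h0 : (n : F) * f t ^ (n - 1) ≠ 0) : HasDerivAt f (g' / (n * f t ^ (n - 1))) t := by
  set q : 𝕜 → F := fun s => ∑ i ∈ Finset.range n, f s ^ i * f t ^ (n - 1 - i)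
  have hq : Filter.Tendsto q (𝓝[≠] t) (𝓝 (n * f t ^ (n - 1))) := by
    have hcont : ContinuousAt q t := by fun_prop
    have hqt : q t = n * f t ^ (n - 1) := by rw [← geom_sum₂_self]
    rw [← hqt]
    exact hcont.continuousWithinAt
  rw [hasDerivAt_iff_tendsto_slope] at hg ⊢
  refine (hg.div hq h0).congr' ?_
  filter_upwards [hq.eventually_ne h0, hfg.filter_mono nhdsWithin_le_nhds] with s hqs hs
  rw [Pi.div_apply, div_eq_iff hqs, slope_def_module, slope_def_module, ← hs, ← hfg.self_of_nhds,
    ← geom_sum₂_mul, mul_comm, smul_mul_assoc]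

theorem differentiableAt_of_pow_eventuallyEq {𝕜 F : Type*} [NontriviallyNormedField 𝕜]
    [NormedField F] [CharZero F] [NormedAlgebra 𝕜 F] {f g : 𝕜 → F} {t : 𝕜} {n : ℕ} (hn : n ≠ 0)
    (hf : ContinuousAt f t) (hfg : ∀ᶠ s in 𝓝 t, f s ^ n = g s) (hg : DifferentiableAt 𝕜 g t)
    (h0 : f t ≠ 0) : DifferentiableAt 𝕜 f t :=
  (hasDerivAt_of_pow_eventuallyEq hf hfg hg.hasDerivAt
    (mul_ne_zero (Nat.cast_ne_zero.2 hn) (pow_ne_zero _ h0))).differentiableAt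

theorem countable_setOf_eq_and_deriv_ne_zero {E : Type*} [NormedAddCommGroup E] [NormedSpace ℝ E]
    (f : ℝ → E) (c : E) : {t | f t = c ∧ deriv f t ≠ 0}.Countable := by
  have : DiscreteTopology {t | f t = c ∧ deriv f t ≠ 0} := by
    rw [discreteTopology_subtype_iff]
    rintro x ⟨-, hx⟩
    rw [← disjoint_iff, Filter.disjoint_principal_right]
    filter_upwards [(differentiableAt_of_deriv_ne_zero hx).hasDerivAt.eventually_ne hx (c := c)]
      with z hz hzc using hz hzc.1
  exact (countable_of_Lindelof_of_discrete : Countable {t | f t = c ∧ deriv f t ≠ 0}).to_set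

variable {f : ℝ → ℂ} {m : ℕ} {r : ℝ}

theorem mem_steepSet_of_lt_norm_deriv {u u' : ℝ → ℂ} {t : ℝ} (hf : ContinuousAt f t)
    (hfu : ∀ᶠ s in 𝓝 t, f s ^ (m + 1) = u s) (hu : HasDerivAt u (u' t) t) (h0 : f t ≠ 0)
    (hr : 0 ≤ r) (hrt : r < ‖deriv f t‖) : t ∈ steepSet u u' m ((m + 1) * r) := by
  have hm : ((m + 1 : ℕ) : ℂ) * f t ^ m ≠ 0 :=
    mul_ne_zero (Nat.cast_ne_zero.2 m.succ_ne_zero) (pow_ne_zero _ h0)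
  have hderiv : u' t = (m + 1 : ℕ) * f t ^ m * deriv f t := by
    rw [(hasDerivAt_of_pow_eventuallyEq hf hfu hu hm).deriv, Nat.add_sub_cancel,
      mul_div_cancel₀ _ hm]
  have hnorm : ‖u' t‖ = (m + 1) * ‖f t‖ ^ m * ‖deriv f t‖ := by
    rw [hderiv, norm_mul, norm_mul, norm_pow, Complex.norm_natCast, Nat.cast_succ]
  have : 0 < ‖f t‖ := norm_pos_iff.2 h0
  calc ((m + 1) * r) ^ (m + 1) * ‖u t‖ ^ m
      = ((m + 1) * ‖f t‖ ^ m * r) ^ (m + 1) := by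
        rw [← hfu.self_of_nhds, norm_pow, pow_right_comm, ← mul_pow, mul_right_comm]
    _ < ((m + 1) * ‖f t‖ ^ m * ‖deriv f t‖) ^ (m + 1) := by gcongr
    _ = ‖u' t‖ ^ (m + 1) := by rw [hnorm]

theorem DerivChain.pow_mul_volume_real_lt_norm_deriv_pow_le {d : ℕ → ℝ → ℂ} {L : ℝ≥0}
    {a b A : ℝ} (hd : DerivChain d m (Icc a b)) (hL : LipschitzOnWith L (d m) (Icc a b))
    (hm : m ≠ 0) (hab : a < b) (hA : ∀ x ∈ Icc a b, ‖d 1 x‖ ≤ A) (hf : ContinuousOn f (Ioo a b))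
    (hfd : ∀ t ∈ Ioo a b, f t ^ (m + 1) = d 0 t) (hr : 0 ≤ r) :
    r ^ (m + 1) * volume.real {t | t ∈ Ioo a b ∧ r < ‖deriv f t‖} ^ m ≤
      2 ^ m * weakTypeConst m * max (L * (b - a) ^ m) A := by
  set ρ := (m + 1) / 2 * r with hρ
  have hrρ : r ≤ ρ := le_mul_of_one_le_left hr <| by
    have : (1 : ℝ) ≤ m := by exact_mod_cast Nat.one_le_iff_ne_zero.2 hm
    linarith
  have hsub : {t | t ∈ Ioo a b ∧ r < ‖deriv f t‖} \ (steepSet (d 0) (d 1) m (2 * ρ) ∩ Icc a b) ⊆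
      {t | f t = 0 ∧ deriv f t ≠ 0} := by
    rintro t ⟨⟨ht, hrt⟩, hsteep⟩
    refine ⟨by_contra fun h0 => hsteep ⟨?_, Ioo_subset_Icc_self ht⟩,
      norm_pos_iff.1 (hr.trans_lt hrt)⟩
    have hnhds : Ioo a b ∈ 𝓝 t := Ioo_mem_nhds ht.1 ht.2
    rw [show 2 * ρ = (m + 1) * r by rw [hρ]; ring]
    exact mem_steepSet_of_lt_norm_deriv (hf.continuousAt hnhds)
      (Filter.eventually_of_mem hnhds hfd) (hd.hasDerivAt (Nat.pos_of_ne_zero hm) ht) h0 hr hrt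
  have hae := ae_le_set.2 <|
    measure_mono_null hsub ((countable_setOf_eq_and_deriv_ne_zero f 0).measure_zero volume)
  have hV : volume.real {t | t ∈ Ioo a b ∧ r < ‖deriv f t‖} ≤
      volume.real (steepSet (d 0) (d 1) m (2 * ρ) ∩ Icc a b) :=
    ENNReal.toReal_mono (measure_ne_top_of_subset inter_subset_right measure_Icc_lt_top.ne)
      (measure_mono_ae hae)
  calc _ ≤ ρ ^ (m + 1) * volume.real (steepSet (d 0) (d 1) m (2 * ρ) ∩ Icc a b) ^ m := by gcongr
    _ ≤ _ := hd.pow_mul_volume_real_steepSet_complex_pow_le hL hm hab hA (hr.trans hrρ)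

end Root

/-! ### Absolute continuity -/

section AbsContOn

variable {E : Type*} [NormedAddCommGroup E] {f : ℝ → E} {S : Set ℝ} {u v : ℝ}

theorem absContOn_of_lipschitzOnWith {K : ℝ≥0} (hf : LipschitzOnWith K f S) : AbsContOn f S := by
  intro ε hε
  refine ⟨ε / (K + 1), by positivity, fun N u v huv _ hlen => ?_⟩
  rw [lt_div_iff₀ (by positivity)] at hlen
  have hinc : ∀ i, ‖f (v i) - f (u i)‖ ≤ (v i - u i) * (K + 1) := fun i =>
    calc ‖f (v i) - f (u i)‖ ≤ K * ‖v i - u i‖ :=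
          hf.norm_sub_le ((huv i).2 (right_mem_Icc.2 (huv i).1))
            ((huv i).2 (left_mem_Icc.2 (huv i).1))
      _ = (v i - u i) * K := by rw [Real.norm_of_nonneg (sub_nonneg.2 (huv i).1), mul_comm]
      _ ≤ (v i - u i) * (K + 1) :=
          mul_le_mul_of_nonneg_left (by simp) (sub_nonneg.2 (huv i).1)
  calc ∑ i, ‖f (v i) - f (u i)‖ ≤ ∑ i, (v i - u i) * (K + 1) :=
        Finset.sum_le_sum fun i _ => hinc i
    _ = (∑ i, (v i - u i)) * (K + 1) := (Finset.sum_mul _ _ _).symm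
    _ < ε := hlen

theorem absContOn_of_enorm_sub_le_setLIntegral {φ : ℝ → ℝ≥0∞} (hφ : ∫⁻ t in S, φ t ≠ ∞)
    (hf : ∀ u v, u ≤ v → Icc u v ⊆ S → ‖f v - f u‖ₑ ≤ ∫⁻ t in Ioo u v, φ t) : AbsContOn f S := by
  intro ε hε
  obtain ⟨δ, hδ, hφδ⟩ := exists_pos_setLIntegral_lt_of_measure_lt hφ
    (ENNReal.ofReal_pos.2 hε).ne'
  obtain ⟨η, hη, hηδ⟩ := ENNReal.lt_iff_exists_nnreal_btwn.1 hδ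
  refine ⟨η, by exact_mod_cast hη, fun N u v huv hdisj hlen => ?_⟩
  have hmeas : volume (⋃ i, Ioo (u i) (v i)) < δ :=
    calc volume (⋃ i, Ioo (u i) (v i)) ≤ ∑ i, volume (Ioo (u i) (v i)) :=
          measure_iUnion_fintype_le _ _
      _ = ENNReal.ofReal (∑ i, (v i - u i)) := by
        simp_rw [Real.volume_Ioo]
        exact (ENNReal.ofReal_sum_of_nonneg fun i _ => sub_nonneg.2 (huv i).1).symm
      _ ≤ η := ENNReal.ofReal_le_iff_le_toReal ENNReal.coe_ne_top |>.2 hlen.le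
      _ < δ := hηδ
  have hsub : ⋃ i, Ioo (u i) (v i) ⊆ S :=
    iUnion_subset fun i => Ioo_subset_Icc_self.trans (huv i).2
  have hint := hφδ _ ((Measure.restrict_apply_le _ _).trans_lt hmeas)
  rw [Measure.restrict_restrict (.iUnion fun i => measurableSet_Ioo), inter_eq_left.2 hsub,
    lintegral_iUnion (fun i => measurableSet_Ioo) hdisj, tsum_fintype] at hint
  refine (ENNReal.ofReal_lt_ofReal_iff hε).1 ?_
  calc ENNReal.ofReal (∑ i, ‖f (v i) - f (u i)‖) = ∑ i, ‖f (v i) - f (u i)‖ₑ := by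
        simp_rw [ENNReal.ofReal_sum_of_nonneg fun i _ => norm_nonneg (f (v i) - f (u i)),
          ofReal_norm]
    _ ≤ ∑ i, ∫⁻ t in Ioo (u i) (v i), φ t :=
        Finset.sum_le_sum fun i _ => hf _ _ (huv i).1 (huv i).2
    _ < ENNReal.ofReal ε := hint

variable [NormedSpace ℝ E] [CompleteSpace E]

theorem enorm_sub_le_setLIntegral_enorm_deriv (huv : u ≤ v) (hf : ContinuousOn f (Icc u v))
    (hd : ∀ t ∈ Ioo u v, DifferentiableAt ℝ f t) (hi : IntegrableOn (deriv f) (Ioo u v)) :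
    ‖f v - f u‖ₑ ≤ ∫⁻ t in Ioo u v, ‖deriv f t‖ₑ := by
  rw [← intervalIntegral.integral_eq_sub_of_hasDerivAt_of_le huv hf
    (fun t ht => (hd t ht).hasDerivAt) ((intervalIntegrable_iff_integrableOn_Ioo_of_le huv).2 hi),
    intervalIntegral.integral_of_le huv, ← restrict_Ioo_eq_restrict_Ioc]
  exact enorm_integral_le_lintegral_enorm _

theorem enorm_sub_le_setLIntegral_enorm_deriv_of_ne_zero (huv : u ≤ v)
    (hf : ContinuousOn f (Icc u v)) (hd : ∀ t ∈ Ioo u v, f t ≠ 0 → DifferentiableAt ℝ f t)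
    (hi : IntegrableOn (deriv f) (Ioo u v)) :
    ‖f v - f u‖ₑ ≤ ∫⁻ t in Ioo u v, ‖deriv f t‖ₑ := by
  rcases (Icc u v ∩ f ⁻¹' {0}).eq_empty_or_nonempty with hempty | hne
  · exact enorm_sub_le_setLIntegral_enorm_deriv huv hf (fun t ht => hd t ht fun h0 =>
      notMem_empty t (hempty ▸ ⟨Ioo_subset_Icc_self ht, h0⟩)) hi
  · -- Only the part before the first zero and the part after the last one contribute.
    have hcompact : IsCompact (Icc u v ∩ f ⁻¹' {0}) := isCompact_Icc.of_isClosed_subset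
      (hf.preimage_isClosed_of_isClosed isClosed_Icc isClosed_singleton) inter_subset_left
    obtain ⟨p, ⟨hp, hp0 : f p = 0⟩, hleast⟩ := hcompact.exists_isLeast hne
    obtain ⟨q, ⟨hq, hq0 : f q = 0⟩, hgreatest⟩ := hcompact.exists_isGreatest hne
    have hpq : p ≤ q := hleast ⟨hq, hq0⟩
    have hup : Ioo u p ⊆ Ioo u v := Ioo_subset_Ioo_right hp.2
    have hqv : Ioo q v ⊆ Ioo u v := Ioo_subset_Ioo_left hq.1
    have hbefore := enorm_sub_le_setLIntegral_enorm_deriv hp.1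
      (hf.mono (Icc_subset_Icc_right hp.2))
      (fun t ht => hd t (hup ht) fun h0 =>
        ht.2.not_ge (hleast ⟨Ioo_subset_Icc_self (hup ht), h0⟩)) (hi.mono_set hup)
    have hafter := enorm_sub_le_setLIntegral_enorm_deriv hq.2
      (hf.mono (Icc_subset_Icc_left hq.1))
      (fun t ht => hd t (hqv ht) fun h0 =>
        ht.1.not_ge (hgreatest ⟨Ioo_subset_Icc_self (hqv ht), h0⟩)) (hi.mono_set hqv)
    have hdisj : Disjoint (Ioo u p) (Ioo q v) :=
      disjoint_left.2 fun x hx hx' => (hx.2.trans_le hpq).not_gt hx'.1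
    calc ‖f v - f u‖ₑ = ‖(f p - f u) + (f v - f q)‖ₑ := by rw [hp0, hq0]; congr 1; abel
      _ ≤ ‖f p - f u‖ₑ + ‖f v - f q‖ₑ := enorm_add_le _ _
      _ ≤ (∫⁻ t in Ioo u p, ‖deriv f t‖ₑ) + ∫⁻ t in Ioo q v, ‖deriv f t‖ₑ :=
        add_le_add hbefore hafter
      _ = ∫⁻ t in Ioo u p ∪ Ioo q v, ‖deriv f t‖ₑ := (lintegral_union measurableSet_Ioo hdisj).symm
      _ ≤ ∫⁻ t in Ioo u v, ‖deriv f t‖ₑ := lintegral_mono_set (union_subset hup hqv)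

theorem absContOn_of_integrableOn_deriv (hf : ContinuousOn f S)
    (hd : ∀ t ∈ S, f t ≠ 0 → DifferentiableAt ℝ f t) (hi : IntegrableOn (deriv f) S) :
    AbsContOn f S :=
  absContOn_of_enorm_sub_le_setLIntegral hi.hasFiniteIntegral.ne fun u v huv hsub =>
    have hIoo : Ioo u v ⊆ S := Ioo_subset_Icc_self.trans hsub
    enorm_sub_le_setLIntegral_enorm_deriv_of_ne_zero huv (hf.mono hsub)
      (fun t ht => hd t (hIoo ht)) (hi.mono_set hIoo)

end AbsContOn

/-! ### Weak-type bounds -/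

section WeakType

theorem integrable_of_measureReal_lt_norm_le {α E : Type*} [MeasurableSpace α]
    [NormedAddCommGroup E] {μ : Measure α} [IsFiniteMeasure μ] {f : α → E}
    (hf : AEStronglyMeasurable f μ) {p B : ℝ} (hp : 1 < p)
    (hB : ∀ r > 0, μ.real {x | r < ‖f x‖} ≤ B * r ^ (-p)) : Integrable f μ := by
  refine ⟨hf, ?_⟩
  have hlarge : ∫⁻ r in Ioi (1 : ℝ), μ {x | r < ‖f x‖} < ∞ :=
    calc ∫⁻ r in Ioi (1 : ℝ), μ {x | r < ‖f x‖}
        ≤ ∫⁻ r in Ioi (1 : ℝ), ENNReal.ofReal (B * r ^ (-p)) :=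
          setLIntegral_mono' measurableSet_Ioi fun r hr => by
            rw [← ofReal_measureReal]
            exact ENNReal.ofReal_le_ofReal (hB r (zero_lt_one.trans hr))
      _ < ∞ := (((integrableOn_Ioi_rpow_iff zero_lt_one).2
          (neg_lt_neg hp)).const_mul B).lintegral_lt_top
  have hsmall : ∫⁻ r in Ioc (0 : ℝ) 1, μ {x | r < ‖f x‖} < ∞ :=
    calc ∫⁻ r in Ioc (0 : ℝ) 1, μ {x | r < ‖f x‖} ≤ ∫⁻ _ in Ioc (0 : ℝ) 1, μ univ :=
          lintegral_mono fun r => measure_mono (subset_univ _)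
      _ < ∞ := by simp
  calc ∫⁻ x, ‖f x‖ₑ ∂μ = ∫⁻ x, ENNReal.ofReal ‖f x‖ ∂μ := by simp_rw [ofReal_norm]
    _ = ∫⁻ r in Ioi 0, μ {x | r < ‖f x‖} :=
      lintegral_eq_lintegral_meas_lt μ (.of_forall fun x => norm_nonneg _) hf.norm.aemeasurable
    _ = (∫⁻ r in Ioc 0 1, μ {x | r < ‖f x‖}) + ∫⁻ r in Ioi 1, μ {x | r < ‖f x‖} := by
      rw [← Ioc_union_Ioi_eq_Ioi zero_le_one,
        lintegral_union measurableSet_Ioi (Ioc_disjoint_Ioi le_rfl)]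
    _ < ∞ := ENNReal.add_lt_top.2 ⟨hsmall, hlarge⟩

variable {m : ℕ} {r V B : ℝ}

theorem mul_rpow_le_mul_max_of_pow_mul_pow_le {C L A l : ℝ} (hr : 0 ≤ r) (hV : 0 ≤ V) (hC : 0 ≤ C)
    (hL : 0 ≤ L) (hl : 0 ≤ l) (hA : 0 ≤ A)
    (h : r ^ (m + 1) * V ^ m ≤ C * max (L * l ^ m) A) :
    r * V ^ (m * ((m + 1 : ℕ) : ℝ)⁻¹) ≤ C ^ ((m + 1 : ℕ) : ℝ)⁻¹ *
      max (L ^ ((m + 1 : ℕ) : ℝ)⁻¹ * l ^ (m * ((m + 1 : ℕ) : ℝ)⁻¹)) (A ^ ((m + 1 : ℕ) : ℝ)⁻¹) :=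
  calc r * V ^ (m * ((m + 1 : ℕ) : ℝ)⁻¹)
      = (r ^ (m + 1) * V ^ m) ^ ((m + 1 : ℕ) : ℝ)⁻¹ := by
        rw [Real.mul_rpow (by positivity) (by positivity),
          Real.pow_rpow_inv_natCast hr m.succ_ne_zero, Real.rpow_mul hV, Real.rpow_natCast]
    _ ≤ (C * max (L * l ^ m) A) ^ ((m + 1 : ℕ) : ℝ)⁻¹ := by gcongr
    _ = _ := by
        rw [Real.mul_rpow hC (by positivity), Real.rpow_max (by positivity) hA (by positivity),
          Real.mul_rpow hL (by positivity), Real.rpow_mul hl, Real.rpow_natCast]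

theorem le_mul_rpow_neg_of_pow_mul_pow_le (hm : m ≠ 0) (hr : 0 < r) (hV : 0 ≤ V)
    (hB : r ^ (m + 1) * V ^ m ≤ B) : V ≤ B ^ (m : ℝ)⁻¹ * r ^ (-(1 + (m : ℝ)⁻¹)) := by
  have hmR : (m : ℝ) ≠ 0 := Nat.cast_ne_zero.2 hm
  have hroot : (r ^ (m + 1)) ^ (m : ℝ)⁻¹ = r ^ (1 + (m : ℝ)⁻¹) := by
    rw [← Real.rpow_natCast, ← Real.rpow_mul hr.le]
    congr 1
    push_cast
    field_simp
  rw [Real.rpow_neg hr.le, ← div_eq_mul_inv, le_div_iff₀ (by positivity), ← hroot]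
  calc V * (r ^ (m + 1)) ^ (m : ℝ)⁻¹ = (r ^ (m + 1) * V ^ m) ^ (m : ℝ)⁻¹ := by
        rw [Real.mul_rpow (by positivity) (by positivity), Real.pow_rpow_inv_natCast hV hm,
          mul_comm]
    _ ≤ B ^ (m : ℝ)⁻¹ := by gcongr

theorem integrableOn_deriv_of_pow_mul_volume_real_pow_le {E : Type*} [NormedAddCommGroup E]
    [NormedSpace ℝ E] [CompleteSpace E] {f : ℝ → E} {S : Set ℝ} (hS : MeasurableSet S)
    (hSfin : volume S ≠ ∞) (hm : m ≠ 0)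
    (hB : ∀ r ≥ 0, r ^ (m + 1) * volume.real {t | t ∈ S ∧ r < ‖deriv f t‖} ^ m ≤ B) :
    IntegrableOn (deriv f) S := by
  have : IsFiniteMeasure (volume.restrict S) := ⟨by simpa using hSfin.lt_top⟩
  refine integrable_of_measureReal_lt_norm_le (p := 1 + (m : ℝ)⁻¹) (B := B ^ (m : ℝ)⁻¹)
    (aestronglyMeasurable_deriv f _) (lt_add_of_pos_right 1 (by positivity)) fun r hr => ?_
  rw [measureReal_restrict_apply' hS, inter_comm]
  exact le_mul_rpow_neg_of_pow_mul_pow_le hm hr measureReal_nonneg (hB r hr.le)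

end WeakType

/-! ### Roots of `C^{m,1}` functions -/

namespace MemCk1

variable {d : ℕ → ℝ → ℂ} {f : ℝ → ℂ} {m : ℕ} {a b r : ℝ}

theorem pow_mul_volume_real_lt_norm_deriv_pow_le (hd : MemCk1 d m (Icc a b)) (hm : m ≠ 0)
    (hab : a < b) (hf : ContinuousOn f (Ioo a b)) (hfd : ∀ t ∈ Ioo a b, f t ^ (m + 1) = d 0 t)
    (hr : 0 ≤ r) :
    r ^ (m + 1) * volume.real {t | t ∈ Ioo a b ∧ r < ‖deriv f t‖} ^ m ≤
      2 ^ m * weakTypeConst m * max (HolderConst 1 (Ioo a b) (d m) * (b - a) ^ m)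
        (sSup ((fun x => ‖d 1 x‖) '' Ioo a b)) := by
  obtain ⟨hchain, L, hL⟩ := hd
  have hLip := lipschitzOnWith_holderConst_Ioo hab (lipschitzOnWith_toNNReal_of_norm_sub_le hL)
  have hcont := hchain.continuousOn_of_le hLip.continuousOn (Nat.one_le_iff_ne_zero.2 hm)
  simpa only [Real.coe_toNNReal _ (holderConst_nonneg 1 (Ioo a b) (d m))] using
    hchain.pow_mul_volume_real_lt_norm_deriv_pow_le hLip hm hab
      (fun x hx => norm_le_sSup_image_Ioo hab hcont hx) hf hfd hr

theorem absContOn_of_pow_eq (hd : MemCk1 d m (Icc a b)) (hab : a < b)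
    (hf : ContinuousOn f (Ioo a b)) (hfd : ∀ t ∈ Ioo a b, f t ^ (m + 1) = d 0 t) :
    AbsContOn f (Ioo a b) := by
  rcases eq_or_ne m 0 with rfl | hm
  · obtain ⟨-, L, hL⟩ := hd
    have hfL : ∀ x ∈ Ioo a b, ∀ y ∈ Ioo a b, ‖f x - f y‖ ≤ L * |x - y| := fun x hx y hy => by
      simpa only [← hfd x hx, ← hfd y hy, zero_add, pow_one] using
        hL x (Ioo_subset_Icc_self hx) y (Ioo_subset_Icc_self hy)
    exact absContOn_of_lipschitzOnWith (lipschitzOnWith_toNNReal_of_norm_sub_le hfL)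
  · refine absContOn_of_integrableOn_deriv hf (fun t ht h0 => ?_)
      (integrableOn_deriv_of_pow_mul_volume_real_pow_le measurableSet_Ioo measure_Ioo_lt_top.ne hm
        fun r hr => hd.pow_mul_volume_real_lt_norm_deriv_pow_le hm hab hf hfd hr)
    have hnhds : Ioo a b ∈ 𝓝 t := Ioo_mem_nhds ht.1 ht.2
    exact differentiableAt_of_pow_eventuallyEq m.succ_ne_zero (hf.continuousAt hnhds)
      (Filter.eventually_of_mem hnhds hfd)
      (hd.1.hasDerivAt (Nat.pos_of_ne_zero hm) ht).differentiableAt h0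

end MemCk1

/-- If `f` is continuous on a bounded open interval `I` and `f^n = g`
with `g ∈ C^{n-1,1}(Ī,ℂ)`, then `f` is absolutely continuous on `I` and, for `n ≥ 2`,
its a.e. derivative lies in weak-`L^{n'}`, `n' = n/(n-1)`, with
`‖f'‖_{n',w,I} ≤ C(n) max{Lip_I(g^{(n-1)})^{1/n} |I|^{1/n'}, ‖g'‖_∞^{1/n}}`. -/
theorem radical_weak_Lp (n : ℕ) (hn : 1 ≤ n) :
    ∃ C : ℝ, 0 < C ∧
      ∀ (a b : ℝ), a < b →
      ∀ d : ℕ → ℝ → ℂ,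
      MemCk1 d (n - 1) (Icc a b) →
      ∀ f : ℝ → ℂ, ContinuousOn f (Ioo a b) →
      (∀ t ∈ Ioo a b, f t ^ n = d 0 t) →
      AbsContOn f (Ioo a b) ∧
      (2 ≤ n →
        ∀ r : ℝ, 0 ≤ r →
          r * (volume {t | t ∈ Ioo a b ∧ r < ‖deriv f t‖}).toReal ^
              (1 / ((n : ℝ) / ((n : ℝ) - 1))) ≤
            C * max
              ((HolderConst 1 (Ioo a b) (d (n - 1))) ^ ((n : ℝ)⁻¹) *
                (b - a) ^ (1 / ((n : ℝ) / ((n : ℝ) - 1))))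
              ((sSup ((fun x => ‖d 1 x‖) '' Ioo a b)) ^ ((n : ℝ)⁻¹))) := by
  obtain ⟨m, rfl⟩ := Nat.exists_eq_add_of_le' hn
  have hC := weakTypeConst_pos m
  refine ⟨(2 ^ m * weakTypeConst m) ^ ((m + 1 : ℕ) : ℝ)⁻¹, by positivity,
    fun a b hab d hd f hf hfd => ⟨hd.absContOn_of_pow_eq hab hf hfd, fun hm r hr => ?_⟩⟩
  have hexp : 1 / (((m + 1 : ℕ) : ℝ) / (((m + 1 : ℕ) : ℝ) - 1)) = m * ((m + 1 : ℕ) : ℝ)⁻¹ := by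
    rw [one_div_div, Nat.cast_succ, add_sub_cancel_right, div_eq_mul_inv]
  have hsup : 0 ≤ sSup ((fun x => ‖d 1 x‖) '' Ioo a b) :=
    Real.sSup_nonneg (forall_mem_image.2 fun x _ => norm_nonneg (d 1 x))
  rw [hexp]
  exact mul_rpow_le_mul_max_of_pow_mul_pow_le hr measureReal_nonneg (by positivity)
    (holderConst_nonneg _ _ _) (sub_nonneg.2 hab.le) hsup
    (hd.pow_mul_volume_real_lt_norm_deriv_pow_le (by omega) hab hf hfd hr)
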